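/- Let (X,B) be a standard Borel space. For every Polish topology τ on X generating B there are random variables {Ξ_A : A ∈ B}, Ξ_A : F*_τ(X) → ℤ_{≥0} ∪ {∞} defined on the Effros space of infinite τ-closed subsets, and a one-to-one correspondence μ ↦ μ*_τ from the non-atomic σ-finite infinite τ-locally finite Borel measures on (X,B) to probability measures on (F*_τ(X), E*_τ(X)), such that for every such μ: (i) {Ξ_A : A ∈ B} forms a Poisson point process with base space (X,B,μ) under μ*_τ, and μ*_τ is the unique probability measure with this property; (ii) μ*_τ is supported on the class of τ-discrete closed sets; (iii) on the support of μ*_τ one has Ξ_A(F) = #(A ∩ F) for every A ∈ B. -/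

import Mathlib

/-!
Statement 9 (Poisson random set): for a standard Borel space `(X, B)` and any Polish
topology `τ` generating `B`, there are random variables `Ξ_A : F*_τ(X) → ℕ∞` on the
Effros space of infinite closed sets and a one-to-one correspondence `μ ↦ μ*_τ` from
non-atomic σ-finite infinite `τ`-locally finite Borel measures to probability measures
on `F*_τ(X)` making `{Ξ_A}` a Poisson point process with base `(X, B, μ)`; `μ*_τ` is
supported on the `τ`-discrete closed sets, on which `Ξ_A` counts `#(A ∩ F)`.
-/

open MeasureTheory Filter Topology
open scoped ENNReal symmDiff

noncomputable section

/-- The Effros Borel space: the set of `τ`-closed subsets of `X`. -/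
def EffrosSpace {X : Type*} (τ : TopologicalSpace X) : Type _ :=
  {F : Set X // @IsClosed X τ F}

/-- The Effros σ-algebra, generated by the sets `B_O = {F closed | F ∩ O ≠ ∅}`,
`O` open. -/
instance {X : Type*} (τ : TopologicalSpace X) : MeasurableSpace (EffrosSpace τ) :=
  MeasurableSpace.generateFrom
    {s | ∃ O : Set X, @IsOpen X τ O ∧ s = {F : EffrosSpace τ | (F.1 ∩ O).Nonempty}}

/-- The Effros space of *infinite* `τ`-closed subsets of `X`, with the induced
Effros σ-algebra. -/
def EffrosStar {X : Type*} (τ : TopologicalSpace X) : Type _ :=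
  {F : Set X // @IsClosed X τ F ∧ F.Infinite}

instance {X : Type*} (τ : TopologicalSpace X) : MeasurableSpace (EffrosStar τ) :=
  MeasurableSpace.generateFrom
    {s | ∃ O : Set X, @IsOpen X τ O ∧ s = {F : EffrosStar τ | (F.1 ∩ O).Nonempty}}

/-- A set `F ⊆ X` is `τ`-discrete if every point of `F` is isolated in `F`. -/
def IsTauDiscrete {X : Type*} (τ : TopologicalSpace X) (F : Set X) : Prop :=
  ∀ x ∈ F, ∃ O : Set X, @IsOpen X τ O ∧ x ∈ O ∧ F ∩ O = {x}

/-- `N` has the Poisson distribution with mean `a ∈ [0,∞]` under `ℙ`,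
with the convention that for `a ∈ {0,∞}` it is the constant `a`. -/
def HasPoissonLaw {Ω : Type*} [MeasurableSpace Ω] (ℙ : Measure Ω)
    (N : Ω → ℕ∞) (a : ℝ≥0∞) : Prop :=
  if a = 0 then ∀ᵐ ω ∂ℙ, N ω = 0
  else if a = ∞ then ∀ᵐ ω ∂ℙ, N ω = ⊤
  else ∀ k : ℕ, ℙ {ω | N ω = (k : ℕ∞)} =
    ENNReal.ofReal (Real.exp (-(a.toReal)) * a.toReal ^ k / (Nat.factorial k))

/-- `P` is a Poisson point process on `(Ω, ℙ)` with base space `(X, μ)`. -/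
structure IsPPP {X Ω : Type*} [MeasurableSpace X] [MeasurableSpace Ω]
    (μ : Measure X) (ℙ : Measure Ω) (P : Set X → Ω → ℕ∞) : Prop where
  measurable : ∀ A : Set X, MeasurableSet A → Measurable (P A)
  law : ∀ A : Set X, MeasurableSet A → HasPoissonLaw ℙ (P A) (μ A)
  add : ∀ A B : Set X, MeasurableSet A → MeasurableSet B → Disjoint A B →
    ∀ᵐ ω ∂ℙ, P (A ∪ B) ω = P A ω + P B ω

/-!
A Poisson process with a `σ`-finite intensity `μ` is sampled by splitting `μ` into finite pieces
and throwing, for each piece, a Poisson number of independent points distributed according to that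
piece. Campbell's formula for `𝔼 exp (-∑ f)` gives the Laplace transform, hence the law, of the
number of points in a set; non-atomicity makes the points distinct. If `μ` is infinite and locally
finite, the points almost surely form an infinite locally finite set, which is closed and discrete.

Conversely, let `Ξ A F` count the points of `A` that are isolated in `F`, provided that the isolated
points are dense in `F`, and be `0` otherwise. Under any law making `Ξ` a Poisson process with
infinite intensity, almost surely `Ξ univ ≠ 0`, so the isolated points are dense and `F` misses an
open set `O` exactly when `Ξ O = 0`. These void probabilities `exp (-μ O)` determine the law, and
local finiteness forces `F` to coincide with its isolated points. The void probabilities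
`exp (-μ A)` of all Borel sets determine `μ`.
-/

open ProbabilityTheory Set
open scoped NNReal

/-- The function `a ↦ e^{-a}` on `[0, ∞]`, with `e^{-∞} = 0`: the kernel of the Laplace transform
of a `[0, ∞]`-valued random variable. -/
def expNeg (a : ℝ≥0∞) : ℝ≥0∞ := EReal.exp (-(a : EReal))

namespace expNeg

@[simp] lemma zero : expNeg 0 = 1 := by simp [expNeg]

@[simp] lemma top : expNeg ∞ = 0 := by simp [expNeg]

lemma coe (r : ℝ≥0) : expNeg r = ENNReal.ofReal (Real.exp (-r)) := by
  rw [expNeg, ← EReal.exp_coe]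
  rfl

lemma add (a b : ℝ≥0∞) : expNeg (a + b) = expNeg a * expNeg b := by
  rw [expNeg, EReal.coe_ennreal_add, EReal.neg_add (by simp) (by simp), sub_eq_add_neg,
    EReal.exp_add, expNeg, expNeg]

lemma strictAnti : StrictAnti expNeg := fun _ _ h ↦
  EReal.exp_strictMono (EReal.neg_lt_neg_iff.2 (EReal.coe_ennreal_lt_coe_ennreal_iff.2 h))

lemma le_one (a : ℝ≥0∞) : expNeg a ≤ 1 := zero ▸ strictAnti.antitone zero_le

lemma continuous : Continuous expNeg :=
  ENNReal.continuous_exp.comp (continuous_neg.comp continuous_coe_ennreal_ereal)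

lemma measurable_comp {Ω : Type*} [MeasurableSpace Ω] {f : Ω → ℝ≥0∞} (hf : Measurable f) :
    Measurable fun ω ↦ expNeg (f ω) := continuous.measurable.comp hf

lemma sum {ι : Type*} (s : Finset ι) (f : ι → ℝ≥0∞) :
    expNeg (∑ i ∈ s, f i) = ∏ i ∈ s, expNeg (f i) := by
  classical
  induction s using Finset.induction_on with
  | empty => simp
  | insert i s hi ih => rw [Finset.sum_insert hi, Finset.prod_insert hi, add, ih]

lemma mul_natCast (a : ℝ≥0∞) (n : ℕ) : expNeg (a * n) = expNeg a ^ n := by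
  simpa [mul_comm a] using sum (Finset.range n) fun _ ↦ a

end expNeg

/-! ### Laplace transforms on `ℕ∞` -/

lemma eq_zero_of_forall_tsum_mul_pow_eq_zero {a : ℕ → ℝ} {C : ℝ} (ha : ∀ n, |a n| ≤ C)
    (h : ∀ s ∈ Ioo (0 : ℝ) 1, ∑' n, a n * s ^ n = 0) : a = 0 := by
  set p := FormalMultilinearSeries.ofScalars ℝ a
  have hradius : 0 < p.radius := by
    refine lt_of_lt_of_le (by simp) (p.le_radius_of_bound (r := 1) C fun n ↦ ?_)
    simpa [p] using ha n
  have hseries := (p.hasFPowerSeriesOnBall hradius).hasFPowerSeriesAt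
  have hzero : ∃ᶠ s in 𝓝[≠] (0 : ℝ), p.sum s = 0 := by
    have : ∀ᶠ s in 𝓝[>] (0 : ℝ), p.sum s = 0 := by
      filter_upwards [Ioo_mem_nhdsGT one_pos] with s hs
      simpa [p, FormalMultilinearSeries.sum, mul_comm (s ^ _),
        FormalMultilinearSeries.ofScalars_apply_eq] using h s hs
    exact this.frequently.filter_mono (nhdsGT_le_nhdsNE 0)
  have hp : p = 0 := hseries.locally_zero_iff.1
    (hseries.analyticAt.frequently_zero_iff_eventually_zero.1 hzero)
  exact (FormalMultilinearSeries.ofScalars_series_eq_zero ℝ).1 hp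

lemma measure_enat_ext_natCast {μ ν : Measure ℕ∞} [IsFiniteMeasure μ] (huniv : μ univ = ν univ)
    (h : ∀ k : ℕ, μ {(k : ℕ∞)} = ν {(k : ℕ∞)}) : μ = ν := by
  have hmeas : MeasurableSet (range (Nat.cast : ℕ → ℕ∞)) := .of_discrete
  have hrange : μ (range (Nat.cast : ℕ → ℕ∞)) = ν (range (Nat.cast : ℕ → ℕ∞)) := by
    rw [← iUnion_singleton_eq_range, measure_iUnion, measure_iUnion]
    · simp only [h]
    all_goals simp [Pairwise, Function.onFun]
  have htop : {(⊤ : ℕ∞)} = (range (Nat.cast : ℕ → ℕ∞))ᶜ := by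
    ext n; induction n using ENat.recTopCoe <;> simp
  refine Measure.ext_of_singleton fun n ↦ ?_
  induction n using ENat.recTopCoe with
  | top =>
    rw [htop, measure_compl hmeas (measure_ne_top _ _),
      measure_compl hmeas (hrange ▸ measure_ne_top _ _), huniv, hrange]
  | coe k => exact h k

lemma lintegral_expNeg_mul {t : ℝ≥0} (ht : t ≠ 0) (μ : Measure ℕ∞) :
    ∫⁻ n : ℕ∞, expNeg (t * n) ∂μ = ∑' k : ℕ, expNeg t ^ k * μ {(k : ℕ∞)} := by
  rw [lintegral_countable', ← Nat.cast_injective.tsum_eq (f := fun n : ℕ∞ ↦ expNeg (t * n) * μ {n})]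
  · simp [expNeg.mul_natCast]
  · intro n hn
    induction n using ENat.recTopCoe with
    | top => simp [ENNReal.mul_top, ht] at hn
    | coe k => exact mem_range_self k

lemma hasSum_measureReal_mul_pow {s : ℝ} (hs : s ∈ Ioo 0 1) (μ : Measure ℕ∞) [IsFiniteMeasure μ] :
    HasSum (fun k : ℕ ↦ μ.real {(k : ℕ∞)} * s ^ k)
      (∫⁻ n : ℕ∞, expNeg ((-Real.log s).toNNReal * n) ∂μ).toReal := by
  have hlog : 0 < -Real.log s := neg_pos.2 (Real.log_neg hs.1 hs.2)
  have hexp : expNeg (-Real.log s).toNNReal = ENNReal.ofReal s := by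
    rw [expNeg.coe, Real.coe_toNNReal _ hlog.le, neg_neg, Real.exp_log hs.1]
  have hne : (-Real.log s).toNNReal ≠ 0 := (Real.toNNReal_pos.2 hlog).ne'
  have hterm (k : ℕ) : μ.real {(k : ℕ∞)} * s ^ k =
      (expNeg (-Real.log s).toNNReal ^ k * μ {(k : ℕ∞)}).toReal := by
    rw [hexp, ENNReal.toReal_mul, ENNReal.toReal_pow, ENNReal.toReal_ofReal hs.1.le, mul_comm]
    rfl
  have hfin : ∫⁻ n : ℕ∞, expNeg ((-Real.log s).toNNReal * n) ∂μ ≠ ∞ :=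
    ((lintegral_mono fun _ ↦ expNeg.le_one _).trans_lt (by simp)).ne
  simp only [hterm]
  rw [lintegral_expNeg_mul hne] at hfin ⊢
  rw [ENNReal.tsum_toReal_eq (ENNReal.ne_top_of_tsum_ne_top hfin)]
  exact ENNReal.hasSum_toReal hfin

theorem measure_enat_ext_lintegral_expNeg {μ ν : Measure ℕ∞} [IsFiniteMeasure μ]
    (h : ∀ t : ℝ≥0, ∫⁻ n : ℕ∞, expNeg (t * n) ∂μ = ∫⁻ n : ℕ∞, expNeg (t * n) ∂ν) : μ = ν := by
  have huniv : μ univ = ν univ := by simpa using h 0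
  have : IsFiniteMeasure ν := ⟨huniv ▸ measure_lt_top μ univ⟩
  have hdiff : (fun k : ℕ ↦ μ.real {(k : ℕ∞)} - ν.real {(k : ℕ∞)}) = 0 := by
    refine eq_zero_of_forall_tsum_mul_pow_eq_zero (C := μ.real univ + ν.real univ) (fun k ↦ ?_)
      fun s hs ↦ ?_
    · exact (abs_sub _ _).trans <| by
        simpa only [abs_of_nonneg measureReal_nonneg] using add_le_add
          (measureReal_mono (μ := μ) (subset_univ {(k : ℕ∞)}))
          (measureReal_mono (μ := ν) (subset_univ {(k : ℕ∞)}))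
    · simpa [sub_mul, h] using
        ((hasSum_measureReal_mul_pow hs μ).sub (hasSum_measureReal_mul_pow hs ν)).tsum_eq
  refine measure_enat_ext_natCast huniv fun k ↦ ?_
  exact (measureReal_eq_measureReal_iff).1 (sub_eq_zero.1 (congrFun hdiff k))

/-! ### Poisson distributions with mean in `[0, ∞]` -/

/-- The Poisson distribution on `ℕ∞` with mean `a ∈ [0, ∞]`, degenerate for `a ∈ {0, ∞}`. -/
def extendedPoisson (a : ℝ≥0∞) : Measure ℕ∞ :=
  if a = ∞ then Measure.dirac ⊤ else (poissonMeasure a.toNNReal).map Nat.cast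

instance (a : ℝ≥0∞) : IsProbabilityMeasure (extendedPoisson a) := by
  rw [extendedPoisson]
  split_ifs
  · infer_instance
  · exact Measure.isProbabilityMeasure_map .of_discrete

lemma extendedPoisson_top : extendedPoisson ∞ = Measure.dirac ⊤ := if_pos rfl

lemma extendedPoisson_coe (c : ℝ≥0) :
    extendedPoisson c = (poissonMeasure c).map Nat.cast := by
  simp [extendedPoisson]

lemma extendedPoisson_coe_natCast (c : ℝ≥0) (k : ℕ) :
    extendedPoisson c {(k : ℕ∞)} =
      ENNReal.ofReal (Real.exp (-c) * c ^ k / k.factorial) := by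
  rw [extendedPoisson_coe, Measure.map_apply .of_discrete (measurableSet_singleton _),
    show (Nat.cast : ℕ → ℕ∞) ⁻¹' {(k : ℕ∞)} = {k} by ext; simp, poissonMeasure_singleton]

lemma extendedPoisson_zero : extendedPoisson 0 = Measure.dirac 0 := by
  refine measure_enat_ext_natCast (by simp) fun k ↦ ?_
  rw [← ENNReal.coe_zero, extendedPoisson_coe_natCast]
  cases k <;> simp

lemma extendedPoisson_singleton_zero (a : ℝ≥0∞) : extendedPoisson a {0} = expNeg a := by
  induction a with
  | top => simp [extendedPoisson_top]
  | coe c => simpa [expNeg.coe] using extendedPoisson_coe_natCast c 0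

lemma extendedPoisson_coe_singleton_top (c : ℝ≥0) : extendedPoisson c {⊤} = 0 := by
  rw [extendedPoisson_coe, Measure.map_apply .of_discrete (measurableSet_singleton _)]
  simp [preimage]

lemma lintegral_pow_poissonMeasure (c : ℝ≥0) {s : ℝ≥0∞} (hs : s ≤ 1) :
    ∫⁻ k, s ^ k ∂poissonMeasure c = expNeg (c * (1 - s)) := by
  lift s to ℝ≥0 using (hs.trans_lt ENNReal.one_lt_top).ne
  have hterm (k : ℕ) : (s : ℝ≥0∞) ^ k * poissonMeasure c {k} =
      ENNReal.ofReal (Real.exp (-c) * ((c * s) ^ k / k.factorial)) := by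
    rw [poissonMeasure_singleton, ← ENNReal.ofReal_coe_nnreal, ← ENNReal.ofReal_pow s.coe_nonneg,
      ← ENNReal.ofReal_mul (by positivity)]
    ring_nf
  have hsum : HasSum (fun k : ℕ ↦ Real.exp (-c) * ((c * s : ℝ) ^ k / k.factorial))
      (Real.exp (-(c * (1 - s)))) := by
    have := (NormedSpace.expSeries_div_hasSum_exp (c * s : ℝ)).mul_left (Real.exp (-c))
    rwa [← Real.exp_eq_exp_ℝ, ← Real.exp_add, show -c + c * s = -(c * (1 - s) : ℝ) by ring] at this
  rw [lintegral_countable', tsum_congr hterm, ← ENNReal.ofReal_tsum_of_nonneg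
    (fun k ↦ by positivity) hsum.summable, hsum.tsum_eq]
  norm_cast
  rw [expNeg.coe, NNReal.coe_mul, NNReal.coe_sub (mod_cast hs)]
  rfl

lemma lintegral_expNeg_mul_extendedPoisson (a : ℝ≥0∞) (t : ℝ≥0) :
    ∫⁻ n : ℕ∞, expNeg (t * n) ∂extendedPoisson a = expNeg (a * (1 - expNeg t)) := by
  induction a with
  | top =>
    rw [extendedPoisson_top, lintegral_dirac]
    rcases eq_or_ne t 0 with rfl | ht
    · simp
    · have : expNeg t < 1 := expNeg.zero ▸ expNeg.strictAnti (by positivity)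
      simp [ENNReal.mul_top, ENNReal.top_mul, ht, (tsub_pos_of_lt this).ne']
  | coe c =>
    rw [extendedPoisson_coe, lintegral_map .of_discrete .of_discrete,
      ← lintegral_pow_poissonMeasure c (expNeg.le_one t)]
    simp [expNeg.mul_natCast]

section HasLaw

variable {Ω : Type*} [MeasurableSpace Ω] {P : Measure Ω} {N : Ω → ℕ∞} {a : ℝ≥0∞}

lemma hasPoissonLaw_iff_hasLaw [IsProbabilityMeasure P] (hN : AEMeasurable N P) :
    HasPoissonLaw P N a ↔ HasLaw N (extendedPoisson a) P := by
  have : IsProbabilityMeasure (P.map N) := Measure.isProbabilityMeasure_map hN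
  rw [HasPoissonLaw]
  split_ifs with h0 htop
  · rw [h0, extendedPoisson_zero, hasLaw_dirac_iff, EventuallyEq]
  · rw [htop, extendedPoisson_top, hasLaw_dirac_iff, EventuallyEq]
  · lift a to ℝ≥0 using htop
    simp only [ENNReal.coe_toReal, ← extendedPoisson_coe_natCast]
    have hmap (k : ℕ) : P.map N {(k : ℕ∞)} = P {ω | N ω = k} :=
      Measure.map_apply_of_aemeasurable hN (measurableSet_singleton _)
    simp only [← hmap]
    exact ⟨fun h ↦ ⟨hN, measure_enat_ext_natCast (by simp) h⟩, fun h k ↦ by rw [h.map_eq]⟩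

lemma measure_setOf_eq_zero_of_hasLaw_extendedPoisson (h : HasLaw N (extendedPoisson a) P) :
    P {ω | N ω = 0} = expNeg a :=
  (h.measure_eq (measurableSet_singleton 0)).trans (extendedPoisson_singleton_zero a)

lemma ae_ne_top_of_hasLaw_extendedPoisson (h : HasLaw N (extendedPoisson a) P) (ha : a ≠ ∞) :
    ∀ᵐ ω ∂P, N ω ≠ ⊤ := by
  lift a to ℝ≥0 using ha
  exact measure_eq_zero_iff_ae_notMem.1 <|
    (h.measure_eq (measurableSet_singleton ⊤)).trans (extendedPoisson_coe_singleton_top a)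

lemma ae_eq_top_of_hasLaw_extendedPoisson (h : HasLaw N (extendedPoisson ∞) P) :
    ∀ᵐ ω ∂P, N ω = ⊤ :=
  (extendedPoisson_top ▸ h).ae_eq_of_dirac

lemma hasLaw_extendedPoisson_of_lintegral_expNeg [IsProbabilityMeasure P] (hN : AEMeasurable N P)
    (h : ∀ t : ℝ≥0, ∫⁻ ω, expNeg (t * N ω) ∂P = expNeg (a * (1 - expNeg t))) :
    HasLaw N (extendedPoisson a) P := by
  have : IsProbabilityMeasure (P.map N) := Measure.isProbabilityMeasure_map hN
  refine ⟨hN, measure_enat_ext_lintegral_expNeg fun t ↦ ?_⟩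
  rw [lintegral_map' .of_discrete hN, h, lintegral_expNeg_mul_extendedPoisson]

theorem ae_forall_exists_isOpen_ne_top_of_hasLaw {X : Type*} [MeasurableSpace X]
    [TopologicalSpace X] [SecondCountableTopology X] [OpensMeasurableSpace X] {μ : Measure X}
    [IsLocallyFiniteMeasure μ]
    {N : Set X → Ω → ℕ∞} (h : ∀ A, MeasurableSet A → HasLaw (N A) (extendedPoisson (μ A)) P) :
    ∀ᵐ ω ∂P, ∀ x, ∃ O, IsOpen O ∧ x ∈ O ∧ N O ω ≠ ⊤ := by
  have hbasis := TopologicalSpace.isBasis_countableBasis X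
  have hfinite : ∀ᵐ ω ∂P, ∀ O ∈ TopologicalSpace.countableBasis X, μ O ≠ ∞ → N O ω ≠ ⊤ := by
    refine (ae_ball_iff (TopologicalSpace.countable_countableBasis X)).2 fun O hO ↦ ?_
    by_cases hμ : μ O = ∞
    · exact .of_forall fun _ h ↦ absurd hμ h
    · exact (ae_ne_top_of_hasLaw_extendedPoisson
        (h O (hbasis.isOpen hO).measurableSet) hμ).mono fun _ h _ ↦ h
  filter_upwards [hfinite] with ω hω x
  obtain ⟨V, hxV, hV, hμV⟩ := μ.exists_isOpen_measure_lt_top x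
  obtain ⟨O, hO, hxO, hOV⟩ := hbasis.exists_subset_of_mem_open hxV hV
  exact ⟨O, hbasis.isOpen hO, hxO, hω O hO ((measure_mono hOV).trans_lt hμV).ne⟩

end HasLaw

namespace IsPPP

variable {X Ω : Type*} [MeasurableSpace X] [MeasurableSpace Ω] {P : Measure Ω}
  [IsProbabilityMeasure P] {N : Set X → Ω → ℕ∞}

lemma hasLaw {μ : Measure X} (h : IsPPP μ P N) {A : Set X} (hA : MeasurableSet A) :
    HasLaw (N A) (extendedPoisson (μ A)) P :=
  (hasPoissonLaw_iff_hasLaw (h.measurable A hA).aemeasurable).1 (h.law A hA)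

theorem measure_unique {μ ν : Measure X} (hμ : IsPPP μ P N) (hν : IsPPP ν P N) : μ = ν := by
  ext A hA
  refine expNeg.strictAnti.injective ?_
  rw [← measure_setOf_eq_zero_of_hasLaw_extendedPoisson (hμ.hasLaw hA),
    measure_setOf_eq_zero_of_hasLaw_extendedPoisson (hν.hasLaw hA)]

end IsPPP

/-! ### Poisson sampling -/

section Sampling

lemma lintegral_expNeg_tsum_of_iIndepFun {Ω : Type*} [MeasurableSpace Ω] {P : Measure Ω}
    [IsProbabilityMeasure P] {f : ℕ → Ω → ℝ≥0∞} (hindep : iIndepFun f P)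
    (hf : ∀ n, Measurable (f n)) {a : ℕ → ℝ≥0∞} (h : ∀ n, ∫⁻ ω, expNeg (f n ω) ∂P = expNeg (a n)) :
    ∫⁻ ω, expNeg (∑' n, f n ω) ∂P = expNeg (∑' n, a n) := by
  have hpartial (N : ℕ) : ∫⁻ ω, expNeg (∑ n ∈ Finset.range N, f n ω) ∂P =
      expNeg (∑ n ∈ Finset.range N, a n) := by
    simp_rw [expNeg.sum, ← h]
    exact lintegral_prod_eq_prod_lintegral_of_indepFun _ (fun n ω ↦ expNeg (f n ω))
      (hindep.comp _ fun _ ↦ expNeg.measurable_comp measurable_id)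
      fun n ↦ expNeg.measurable_comp (hf n)
  have hlim : Tendsto (fun N ↦ ∫⁻ ω, expNeg (∑ n ∈ Finset.range N, f n ω) ∂P) atTop
      (𝓝 (∫⁻ ω, expNeg (∑' n, f n ω) ∂P)) :=
    tendsto_lintegral_of_dominated_convergence (fun _ ↦ 1)
      (fun N ↦ expNeg.measurable_comp (Finset.measurable_fun_sum _ fun n _ ↦ hf n))
      (fun N ↦ .of_forall fun ω ↦ expNeg.le_one _) (by simp)
      (.of_forall fun ω ↦ (expNeg.continuous.tendsto _).comp (ENNReal.tendsto_nat_tsum _))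
  simp_rw [hpartial] at hlim
  exact tendsto_nhds_unique hlim
    ((expNeg.continuous.tendsto _).comp (ENNReal.tendsto_nat_tsum _))

variable {X : Type*}

/-- The sum of `f` over the first `K` points of a block `(K, y)`. -/
def blockSum (f : X → ℝ≥0∞) (b : ℕ × (ℕ → X)) : ℝ≥0∞ := ∑ k ∈ Finset.range b.1, f (b.2 k)

/-- The indices `(n, k)` of the points of a sequence of blocks `(K n, y n)` that are used, in the
sense that `k < K n`, and lie in `A`. -/
def hitIndices (A : Set X) (ω : ℕ → ℕ × (ℕ → X)) : Set (ℕ × ℕ) :=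
  {p | p.2 < (ω p.1).1 ∧ (ω p.1).2 p.2 ∈ A}

/-- The random set of the points that are used in a sequence of blocks `(K n, y n)`. -/
def sampledSet (ω : ℕ → ℕ × (ℕ → X)) : Set X :=
  (fun p : ℕ × ℕ ↦ (ω p.1).2 p.2) '' hitIndices univ ω

lemma encard_hitIndices (A : Set X) (ω : ℕ → ℕ × (ℕ → X)) :
    ((hitIndices A ω).encard : ℝ≥0∞) = ∑' n, blockSum (A.indicator 1) (ω n) := by
  rw [← ENNReal.tsum_set_one, tsum_subtype (hitIndices A ω) fun _ ↦ 1, ENNReal.tsum_prod']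
  refine tsum_congr fun n ↦ ?_
  rw [blockSum, tsum_eq_sum (s := Finset.range (ω n).1) fun k hk ↦ ?_]
  · refine Finset.sum_congr rfl fun k hk ↦ ?_
    have hmem : (n, k) ∈ hitIndices A ω ↔ (ω n).2 k ∈ A := and_iff_right (Finset.mem_range.1 hk)
    by_cases h : (ω n).2 k ∈ A <;> simp [hmem, h]
  · exact indicator_of_notMem (fun h ↦ hk (Finset.mem_range.2 h.1)) _

lemma inter_sampledSet (A : Set X) (ω : ℕ → ℕ × (ℕ → X)) :
    A ∩ sampledSet ω = (fun p : ℕ × ℕ ↦ (ω p.1).2 p.2) '' hitIndices A ω := by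
  ext x
  constructor
  · rintro ⟨hx, p, hp, rfl⟩
    exact ⟨p, ⟨hp.1, hx⟩, rfl⟩
  · rintro ⟨p, hp, rfl⟩
    exact ⟨hp.2, p, ⟨hp.1, mem_univ _⟩, rfl⟩

variable [MeasurableSpace X]

lemma measurable_hitIndices {A : Set X} (hA : MeasurableSet A) : Measurable (hitIndices A) := by
  refine measurable_set_iff.2 fun p ↦ Measurable.and ?_ ?_
  · exact (measurableSet_setOfPred (p := fun K ↦ p.2 < K)).1 .of_discrete |>.comp
      (measurable_pi_apply p.1).fst
  · exact (measurableSet_setOfPred (p := (· ∈ A))).1 hA |>.comp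
      ((measurable_pi_apply p.2).comp (measurable_pi_apply p.1).snd)

lemma measurableSet_sampledSet_inter_nonempty {A : Set X} (hA : MeasurableSet A) :
    MeasurableSet {ω : ℕ → ℕ × (ℕ → X) | (sampledSet ω ∩ A).Nonempty} := by
  simp_rw [inter_comm _ A, inter_sampledSet, image_nonempty, ← encard_ne_zero]
  exact measurable_encard.comp (measurable_hitIndices hA) (measurableSet_singleton 0).compl

/-- The law of a Poisson number `K` with mean `c` together with an independent sequence of
independent `P`-distributed points, of which only the first `K` are meant to be used. -/
def poissonBlock (c : ℝ≥0) (P : Measure X) : Measure (ℕ × (ℕ → X)) :=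
  (poissonMeasure c).prod (Measure.infinitePi fun _ : ℕ ↦ P)

instance (c : ℝ≥0) (P : Measure X) [IsProbabilityMeasure P] :
    IsProbabilityMeasure (poissonBlock c P) := by
  rw [poissonBlock]; infer_instance

lemma measurable_blockSum {f : X → ℝ≥0∞} (hf : Measurable f) : Measurable (blockSum f) :=
  measurable_from_prod_countable_right fun K ↦
    Finset.measurable_fun_sum (Finset.range K) fun k _ ↦ hf.comp (measurable_pi_apply k)

lemma lintegral_expNeg_blockSum (c : ℝ≥0) (P : Measure X) [IsProbabilityMeasure P]
    {f : X → ℝ≥0∞} (hf : Measurable f) :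
    ∫⁻ b, expNeg (blockSum f b) ∂poissonBlock c P = expNeg (c * ∫⁻ x, 1 - expNeg (f x) ∂P) := by
  have hg : Measurable fun x ↦ expNeg (f x) := expNeg.measurable_comp hf
  have hle : ∫⁻ x, expNeg (f x) ∂P ≤ 1 :=
    (lintegral_mono fun x ↦ expNeg.le_one _).trans_eq (by simp)
  have hindep : iIndepFun (fun (k : ℕ) (y : ℕ → X) ↦ expNeg (f (y k)))
      (Measure.infinitePi fun _ ↦ P) :=
    iIndepFun_infinitePi (X := fun _ x ↦ expNeg (f x)) fun _ ↦ hg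
  have hcoord (k : ℕ) : ∫⁻ y : ℕ → X, expNeg (f (y k)) ∂Measure.infinitePi (fun _ ↦ P) =
      ∫⁻ x, expNeg (f x) ∂P := by
    rw [← lintegral_map hg (measurable_pi_apply k), Measure.infinitePi_map_eval (fun _ ↦ P) k]
  have hfixed (K : ℕ) : ∫⁻ y : ℕ → X, expNeg (∑ k ∈ Finset.range K, f (y k))
      ∂Measure.infinitePi (fun _ ↦ P) = (∫⁻ x, expNeg (f x) ∂P) ^ K := by
    simp_rw [expNeg.sum]
    rw [lintegral_prod_eq_prod_lintegral_of_indepFun _ _ hindep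
      fun k ↦ hg.comp (measurable_pi_apply k)]
    simp [hcoord]
  rw [poissonBlock, lintegral_prod _ (expNeg.measurable_comp (measurable_blockSum hf)).aemeasurable]
  simp only [blockSum, hfixed]
  rw [lintegral_pow_poissonMeasure c hle, lintegral_sub hg ((hle.trans_lt ENNReal.one_lt_top).ne)
    (.of_forall fun x ↦ expNeg.le_one _), lintegral_const, measure_univ, mul_one]

/-- The law of a sequence of independent Poisson blocks; together, their points form a Poisson
process with intensity `∑ n, c n • P n`. -/
def poissonSampling (c : ℕ → ℝ≥0) (P : ℕ → Measure X) : Measure (ℕ → ℕ × (ℕ → X)) :=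
  Measure.infinitePi fun n ↦ poissonBlock (c n) (P n)

variable (c : ℕ → ℝ≥0) (P : ℕ → Measure X) [∀ n, IsProbabilityMeasure (P n)]

instance : IsProbabilityMeasure (poissonSampling c P) := by
  rw [poissonSampling]; infer_instance

lemma measurePreserving_eval_poissonSampling (n : ℕ) :
    MeasurePreserving (fun ω : ℕ → ℕ × (ℕ → X) ↦ ω n) (poissonSampling c P)
      (poissonBlock (c n) (P n)) :=
  ⟨measurable_pi_apply n, Measure.infinitePi_map_eval _ n⟩

theorem lintegral_expNeg_tsum_blockSum {f : X → ℝ≥0∞} (hf : Measurable f) :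
    ∫⁻ ω, expNeg (∑' n, blockSum f (ω n)) ∂poissonSampling c P =
      expNeg (∫⁻ x, 1 - expNeg (f x) ∂Measure.sum fun n ↦ c n • P n) := by
  have hblock (n : ℕ) : ∫⁻ ω, expNeg (blockSum f (ω n)) ∂poissonSampling c P =
      expNeg (∫⁻ x, 1 - expNeg (f x) ∂c n • P n) := by
    rw [(measurePreserving_eval_poissonSampling c P n).lintegral_comp
      (expNeg.measurable_comp (measurable_blockSum hf)), lintegral_expNeg_blockSum _ _ hf,
      lintegral_smul_measure]
    rfl
  rw [lintegral_sum_measure]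
  exact lintegral_expNeg_tsum_of_iIndepFun
    (iIndepFun_infinitePi (X := fun _ ↦ blockSum f) fun _ ↦ measurable_blockSum hf)
    (fun n ↦ (measurable_blockSum hf).comp (measurable_pi_apply n)) hblock

theorem hasLaw_encard_hitIndices {A : Set X} (hA : MeasurableSet A) :
    HasLaw (fun ω ↦ (hitIndices A ω).encard)
      (extendedPoisson (Measure.sum (fun n ↦ c n • P n) A)) (poissonSampling c P) := by
  refine hasLaw_extendedPoisson_of_lintegral_expNeg
    (measurable_encard.comp (measurable_hitIndices hA)).aemeasurable fun t ↦ ?_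
  have hscale (ω : ℕ → ℕ × (ℕ → X)) : (t : ℝ≥0∞) * (hitIndices A ω).encard =
      ∑' n, blockSum (A.indicator fun _ ↦ t) (ω n) := by
    have hconst (x : X) : t * A.indicator 1 x = A.indicator (fun _ ↦ (t : ℝ≥0∞)) x := by
      by_cases hx : x ∈ A <;> simp [hx]
    simp_rw [encard_hitIndices, ← ENNReal.tsum_mul_left, blockSum, Finset.mul_sum, hconst]
  have hkernel (x : X) : 1 - expNeg (A.indicator (fun _ ↦ (t : ℝ≥0∞)) x) =
      A.indicator (fun _ ↦ 1 - expNeg t) x := by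
    by_cases hx : x ∈ A <;> simp [hx]
  simp_rw [hscale]
  rw [lintegral_expNeg_tsum_blockSum c P (measurable_const.indicator hA)]
  simp_rw [hkernel]
  rw [lintegral_indicator_const hA, mul_comm]

lemma ae_ne_of_indepFun {Ω : Type*} [MeasurableSpace Ω] {Q : Measure Ω} [IsFiniteMeasure Q]
    [MeasurableEq X] {μ ν : Measure X} [SFinite ν] [NullSingletonClass ν]
    {f g : Ω → X} (hf : HasLaw f μ Q) (hg : HasLaw g ν Q) (h : IndepFun f g Q) :
    ∀ᵐ ω ∂Q, f ω ≠ g ω := by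
  have hmeas : MeasurableSet {z : X × X | z.1 ≠ z.2} :=
    (measurableSet_eq_fun measurable_fst measurable_snd).compl
  have hprod : ∀ᵐ z ∂μ.prod ν, z.1 ≠ z.2 := (Measure.ae_prod_iff_ae_ae hmeas).2 <|
    .of_forall fun x ↦ (Measure.ae_ne ν x).mono fun _ h ↦ h.symm
  exact ((IndepFun.hasLaw_prod hf hg h).ae_iff (measurableSet_setOfPred.1 hmeas)).2 hprod

lemma ae_injective_sample [MeasurableEq X] [∀ n, NullSingletonClass (P n)] :
    ∀ᵐ ω ∂poissonSampling c P, Function.Injective fun p : ℕ × ℕ ↦ (ω p.1).2 p.2 := by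
  have hcoord (n k : ℕ) :
      HasLaw (fun y : ℕ → X ↦ y k) (P n) (Measure.infinitePi fun _ : ℕ ↦ P n) :=
    (measurePreserving_eval_infinitePi (fun _ : ℕ ↦ P n) k).hasLaw
  have hblock (n k : ℕ) :
      HasLaw (fun b : ℕ × (ℕ → X) ↦ b.2 k) (P n) (poissonBlock (c n) (P n)) :=
    (hcoord n k).comp measurePreserving_snd.hasLaw
  have hpoint (n k : ℕ) : HasLaw (fun ω ↦ (ω n).2 k) (P n) (poissonSampling c P) :=
    (hblock n k).comp (measurePreserving_eval_poissonSampling c P n).hasLaw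
  have hne : ∀ p q : ℕ × ℕ, p ≠ q →
      ∀ᵐ ω ∂poissonSampling c P, (ω p.1).2 p.2 ≠ (ω q.1).2 q.2 := by
    rintro ⟨n, j⟩ ⟨m, k⟩ hpq
    rcases eq_or_ne n m with rfl | hnm
    · have hjk : j ≠ k := fun h ↦ hpq (h ▸ rfl)
      have hindep := (iIndepFun_infinitePi (P := fun _ : ℕ ↦ P n) (X := fun _ ↦ id)
        fun _ ↦ measurable_id).indepFun hjk
      exact (measurePreserving_eval_poissonSampling c P n).quasiMeasurePreserving.ae
        (Measure.quasiMeasurePreserving_snd.ae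
          (ae_ne_of_indepFun (hcoord n j) (hcoord n k) hindep))
    · have hindep : IndepFun (fun ω ↦ ω n) (fun ω ↦ ω m) (poissonSampling c P) :=
        (iIndepFun_infinitePi (X := fun _ ↦ id) fun _ ↦ measurable_id).indepFun hnm
      exact ae_ne_of_indepFun (hpoint n j) (hpoint m k) <|
        hindep.comp (φ := fun b : ℕ × (ℕ → X) ↦ b.2 j) (ψ := fun b : ℕ × (ℕ → X) ↦ b.2 k)
          (by fun_prop) (by fun_prop)
  have hall : ∀ᵐ ω ∂poissonSampling c P, ∀ p q : ℕ × ℕ, p ≠ q → (ω p.1).2 p.2 ≠ (ω q.1).2 q.2 := by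
    simpa only [ae_all_iff] using hne
  exact hall.mono fun ω hω p q hpq ↦ of_not_not fun hne ↦ hω p q hne hpq

theorem hasLaw_encard_inter_sampledSet [MeasurableEq X] [∀ n, NullSingletonClass (P n)]
    {A : Set X} (hA : MeasurableSet A) :
    HasLaw (fun ω ↦ (A ∩ sampledSet ω).encard)
      (extendedPoisson (Measure.sum (fun n ↦ c n • P n) A)) (poissonSampling c P) := by
  refine (hasLaw_encard_hitIndices c P hA).congr ?_
  filter_upwards [ae_injective_sample c P] with ω hω
  rw [inter_sampledSet, hω.encard_image]

lemma exists_isProbabilityMeasure_smul_eq (μ ν : Measure X) [IsFiniteMeasure μ]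
    [IsProbabilityMeasure ν] (h : μ ≪ ν) :
    ∃ (c : ℝ≥0) (P : Measure X), IsProbabilityMeasure P ∧ P ≪ ν ∧ c • P = μ := by
  rcases eq_or_ne μ 0 with rfl | hμ
  · exact ⟨0, ν, inferInstance, .rfl, zero_smul _ _⟩
  · have : NeZero μ := ⟨hμ⟩
    refine ⟨(μ univ).toNNReal, (μ univ)⁻¹ • μ, inferInstance,
      Measure.smul_absolutelyContinuous.trans h, ?_⟩
    rw [ENNReal.smul_def, ENNReal.coe_toNNReal (measure_ne_top _ _), smul_smul,
      ENNReal.mul_inv_cancel (NeZero.ne _) (measure_ne_top _ _), one_smul]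

lemma exists_sum_smul_isProbabilityMeasure (μ : Measure X) [SFinite μ] [NeZero μ] :
    ∃ (c : ℕ → ℝ≥0) (P : ℕ → Measure X),
      (∀ n, IsProbabilityMeasure (P n) ∧ P n ≪ μ) ∧ Measure.sum (fun n ↦ c n • P n) = μ := by
  have hpart (n : ℕ) : sfiniteSeq μ n ≪ μ.toFinite :=
    (Measure.absolutelyContinuous_of_le (sfiniteSeq_le μ n)).trans (absolutelyContinuous_toFinite μ)
  choose c P hP hPμ hc using fun n ↦ exists_isProbabilityMeasure_smul_eq _ _ (hpart n)
  refine ⟨c, P, fun n ↦ ⟨hP n, (hPμ n).trans (toFinite_absolutelyContinuous μ)⟩, ?_⟩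
  simp only [hc, sum_sfiniteSeq]

theorem exists_random_set_hasLaw_extendedPoisson [MeasurableEq X] (μ : Measure X) [SFinite μ]
    [NeZero μ] [NullSingletonClass μ] :
    ∃ (Q : Measure (ℕ → ℕ × (ℕ → X))) (S : (ℕ → ℕ × (ℕ → X)) → Set X), IsProbabilityMeasure Q ∧
      ∀ A, MeasurableSet A → MeasurableSet {ω | (S ω ∩ A).Nonempty} ∧
        HasLaw (fun ω ↦ (A ∩ S ω).encard) (extendedPoisson (μ A)) Q := by
  obtain ⟨c, P, hP, hμ⟩ := exists_sum_smul_isProbabilityMeasure μ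
  have := fun n ↦ (hP n).1
  have (n : ℕ) : NullSingletonClass (P n) := ⟨fun x ↦ (hP n).2 (measure_singleton x)⟩
  refine ⟨poissonSampling c P, sampledSet, inferInstance, fun A hA ↦
    ⟨measurableSet_sampledSet_inter_nonempty hA, ?_⟩⟩
  simpa only [hμ] using hasLaw_encard_inter_sampledSet c P hA

end Sampling

/-! ### Locally finite sets and isolated points -/

section Topology

variable {X : Type*} [τ : TopologicalSpace X]

/-- The points of `F` that are isolated in `F`. -/
def isolatedPoints (F : Set X) : Set X := {x | ∃ O, IsOpen O ∧ F ∩ O = {x}}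

lemma isolatedPoints_subset (F : Set X) : isolatedPoints F ⊆ F := by
  rintro x ⟨O, -, hO⟩
  exact (hO.ge rfl).1

lemma isTauDiscrete_iff_subset_isolatedPoints {F : Set X} :
    IsTauDiscrete τ F ↔ F ⊆ isolatedPoints F :=
  forall₂_congr fun _ _ ↦ exists_congr fun _ ↦
    and_congr_right fun _ ↦ and_iff_right_of_imp fun h ↦ (h.ge rfl).2

lemma isClosed_of_forall_exists_finite_inter [T1Space X] {D : Set X}
    (h : ∀ x, ∃ O, IsOpen O ∧ x ∈ O ∧ (D ∩ O).Finite) : IsClosed D := by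
  refine closure_subset_iff_isClosed.1 fun x hx ↦ ?_
  obtain ⟨O, hO, hxO, hfin⟩ := h x
  have := hO.inter_closure ⟨hxO, hx⟩
  rw [inter_comm, hfin.isClosed.closure_eq] at this
  exact this.1

lemma isTauDiscrete_of_forall_exists_finite_inter [T1Space X] {D : Set X}
    (h : ∀ x, ∃ O, IsOpen O ∧ x ∈ O ∧ (D ∩ O).Finite) : IsTauDiscrete τ D := by
  intro x hx
  obtain ⟨O, hO, hxO, hfin⟩ := h x
  refine ⟨O \ ((D ∩ O) \ {x}), hO.sdiff hfin.sdiff.isClosed, ⟨hxO, by simp⟩, ?_⟩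
  ext y
  by_cases hyx : y = x <;> simp +contextual [hyx, hx, hxO]

/-- The isolated points of `F` if they are dense in `F`, and no points otherwise. Every point of a
discrete set is counted, but, unlike discreteness, density of the isolated points is a Borel
condition for the Effros `σ`-algebra. -/
def countedPoints (F : Set X) : Set X :=
  {x | x ∈ isolatedPoints F ∧ F ⊆ closure (isolatedPoints F)}

lemma countedPoints_subset (F : Set X) : countedPoints F ⊆ F :=
  (sep_subset _ _).trans (isolatedPoints_subset F)

lemma countedPoints_eq_self {F : Set X} (h : IsTauDiscrete τ F) : countedPoints F = F := by
  rw [isTauDiscrete_iff_subset_isolatedPoints] at h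
  exact (countedPoints_subset F).antisymm fun x hx ↦ ⟨h hx, h.trans subset_closure⟩

lemma subset_closure_countedPoints {F : Set X} (h : (countedPoints F).Nonempty) :
    F ⊆ closure (countedPoints F) := by
  obtain ⟨x, -, hF⟩ := h
  simp only [countedPoints, hF, and_true, ofPred_mem_eq]

lemma inter_nonempty_iff_countedPoints {F O : Set X} (h : (countedPoints F).Nonempty)
    (hO : IsOpen O) : (F ∩ O).Nonempty ↔ (O ∩ countedPoints F).Nonempty := by
  refine ⟨fun ⟨x, hxF, hxO⟩ ↦ ?_, fun ⟨x, hxO, hx⟩ ↦ ⟨x, countedPoints_subset F hx, hxO⟩⟩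
  exact mem_closure_iff.1 (subset_closure_countedPoints h hxF) O hO hxO

end Topology

section Basis

open TopologicalSpace

variable {X : Type*} [TopologicalSpace X]

lemma subsingleton_iff_of_isTopologicalBasis [T2Space X] {B : Set (Set X)}
    (hB : IsTopologicalBasis B) {S : Set X} :
    S.Subsingleton ↔
      ∀ U ∈ B, ∀ V ∈ B, Disjoint U V → ¬((S ∩ U).Nonempty ∧ (S ∩ V).Nonempty) := by
  constructor
  · rintro hS U - V - hUV ⟨⟨x, hxS, hxU⟩, y, hyS, hyV⟩
    exact disjoint_left.1 hUV hxU (hS hyS hxS ▸ hyV)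
  · intro h x hx y hy
    by_contra hxy
    obtain ⟨O₁, O₂, hO₁, hO₂, hxO₁, hyO₂, hdisj⟩ := t2_separation hxy
    obtain ⟨U, hU, hxU, hUO⟩ := hB.exists_subset_of_mem_open hxO₁ hO₁
    obtain ⟨V, hV, hyV, hVO⟩ := hB.exists_subset_of_mem_open hyO₂ hO₂
    exact h U hU V hV (hdisj.mono hUO hVO) ⟨⟨x, hx, hxU⟩, y, hy, hyV⟩

lemma exists_isTopologicalBasis_range_nat (X : Type*) [TopologicalSpace X]
    [SecondCountableTopology X] : ∃ U : ℕ → Set X, IsTopologicalBasis (range U) := by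
  obtain ⟨U, hU⟩ := ((countable_countableBasis X).insert ∅).exists_eq_range (insert_nonempty _ _)
  exact ⟨U, hU ▸ (isBasis_countableBasis X).insert_empty⟩

variable {U : ℕ → Set X} {F : Set X}

lemma mem_isolatedPoints_iff_exists_nat (hU : IsTopologicalBasis (range U)) {x : X} :
    x ∈ isolatedPoints F ↔ ∃ n, F ∩ U n = {x} := by
  refine ⟨fun ⟨O, hO, hFO⟩ ↦ ?_, fun ⟨n, hn⟩ ↦ ⟨U n, hU.isOpen ⟨n, rfl⟩, hn⟩⟩
  obtain ⟨hxF, hxO⟩ := hFO.ge rfl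
  obtain ⟨_, ⟨n, rfl⟩, hxn, hnO⟩ := hU.exists_subset_of_mem_open hxO hO
  exact ⟨n, ((inter_subset_inter_right F hnO).trans_eq hFO).antisymm
    (singleton_subset_iff.2 ⟨hxF, hxn⟩)⟩

lemma subset_closure_isolatedPoints_iff (hU : IsTopologicalBasis (range U)) :
    F ⊆ closure (isolatedPoints F) ↔
      ∀ n, (F ∩ U n).Nonempty → ∃ m, ∃ x ∈ U n, F ∩ U m = {x} := by
  simp only [subset_def, hU.mem_closure_iff, forall_mem_range, Set.Nonempty, mem_inter_iff,
    mem_isolatedPoints_iff_exists_nat hU]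
  exact ⟨fun h n ⟨x, hxF, hxn⟩ ↦ let ⟨y, hy, m, hm⟩ := h x hxF n hxn; ⟨m, y, hy, hm⟩,
    fun h x hxF n hxn ↦ let ⟨m, y, hy, hm⟩ := h n ⟨x, hxF, hxn⟩; ⟨y, hy, m, hm⟩⟩

-- An isolated point is encoded by the least index of a basic open set isolating it.
lemma encard_inter_isolatedPoints (hU : IsTopologicalBasis (range U)) (A : Set X) :
    (A ∩ isolatedPoints F).encard =
      {n | (∃ x ∈ A, F ∩ U n = {x}) ∧ ∀ m < n, ¬∃ x ∈ U n, F ∩ U m = {x}}.encard := by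
  have hspec {x : X} (hx : x ∈ isolatedPoints F) : F ∩ U (sInf {n | F ∩ U n = {x}}) = {x} :=
    Nat.sInf_mem ((mem_isolatedPoints_iff_exists_nat hU).1 hx)
  have hinj : InjOn (fun x ↦ sInf {n | F ∩ U n = {x}}) (A ∩ isolatedPoints F) := by
    intro x hx y hy hxy
    dsimp only at hxy
    exact singleton_injective ((hspec hx.2).symm.trans (hxy ▸ hspec hy.2))
  rw [← hinj.encard_image]
  congr 1
  ext n
  constructor
  · rintro ⟨x, ⟨hxA, hx⟩, rfl⟩
    refine ⟨⟨x, hxA, hspec hx⟩, fun m hm ⟨y, hyU, hy⟩ ↦ Nat.notMem_of_lt_sInf hm ?_⟩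
    obtain rfl : y = x := (hspec hx).le ⟨(hy.ge rfl).1, hyU⟩
    exact hy
  · rintro ⟨⟨x, hxA, hx⟩, hmin⟩
    have hxF : x ∈ isolatedPoints F := (mem_isolatedPoints_iff_exists_nat hU).2 ⟨n, hx⟩
    refine ⟨x, ⟨hxA, hxF⟩, (Nat.sInf_le hx).eq_of_not_lt fun hlt ↦ ?_⟩
    exact hmin _ hlt ⟨x, (hx.ge rfl).2, hspec hxF⟩

end Basis

/-! ### Effros-measurable random sets -/

/-- Measurability of a random set with respect to the Effros `σ`-algebra: for every open set, being
hit by the random set is an event. The values need not be closed. -/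
def EffrosMeasurable {Ω X : Type*} [MeasurableSpace Ω] [TopologicalSpace X]
    (S : Ω → Set X) : Prop :=
  ∀ O, IsOpen O → MeasurableSet {ω | (S ω ∩ O).Nonempty}

namespace EffrosMeasurable

open TopologicalSpace

variable {Ω X : Type*} [MeasurableSpace Ω] [TopologicalSpace X] [T2Space X]
  [SecondCountableTopology X] {S : Ω → Set X}

lemma measurableSet_subsingleton_inter (hS : EffrosMeasurable S) {V : Set X} (hV : IsOpen V) :
    MeasurableSet {ω | (S ω ∩ V).Subsingleton} := by
  have hB := isBasis_countableBasis X
  have hB' := countable_countableBasis X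
  simp only [subsingleton_iff_of_isTopologicalBasis hB, inter_assoc, ofPred_forall]
  exact .biInter hB' fun U hU ↦ .biInter hB' fun W hW ↦ .iInter fun _ ↦
    ((hS _ (hV.inter (hB.isOpen hU))).inter (hS _ (hV.inter (hB.isOpen hW)))).compl

lemma measurableSet_exists_inter_eq_singleton (hS : EffrosMeasurable S) {V : Set X}
    (hV : IsOpen V) : MeasurableSet {ω | ∃ x, S ω ∩ V = {x}} := by
  simp only [exists_eq_singleton_iff_nonempty_subsingleton]
  exact (hS V hV).inter (hS.measurableSet_subsingleton_inter hV)

lemma measurableSet_exists_mem_inter_eq_singleton [MeasurableSpace X] [BorelSpace X]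
    (hS : EffrosMeasurable S) {V A : Set X} (hV : IsOpen V) (hA : MeasurableSet A) :
    MeasurableSet {ω | ∃ x ∈ A, S ω ∩ V = {x}} := by
  have hsing := hS.measurableSet_exists_inter_eq_singleton hV
  induction A, hA using MeasurableSet.induction_on_open with
  | isOpen O hO =>
    convert hsing.inter (hS _ (hV.inter hO)) using 1
    ext ω
    simp only [mem_ofPred_eq, mem_inter_iff, ← inter_assoc]
    constructor
    · rintro ⟨x, hxO, hx⟩
      exact ⟨⟨x, hx⟩, x, hx.ge rfl, hxO⟩
    · rintro ⟨⟨x, hx⟩, y, hy, hyO⟩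
      obtain rfl : y = x := hx.le hy
      exact ⟨y, hyO, hx⟩
  | compl A _ ih =>
    convert hsing.diff ih using 1
    ext ω
    constructor
    · rintro ⟨x, hxA, hx⟩
      exact ⟨⟨x, hx⟩, fun ⟨y, hyA, hy⟩ ↦ hxA (singleton_injective (hx.symm.trans hy) ▸ hyA)⟩
    · rintro ⟨⟨x, hx⟩, h⟩
      exact ⟨x, fun hxA ↦ h ⟨x, hxA, hx⟩, hx⟩
  | iUnion f _ _ ih =>
    convert MeasurableSet.iUnion ih using 1
    ext ω
    simp only [mem_ofPred_eq, mem_iUnion]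
    grind

lemma measurableSet_subset_closure_isolatedPoints [MeasurableSpace X] [BorelSpace X]
    (hS : EffrosMeasurable S) :
    MeasurableSet {ω | S ω ⊆ closure (isolatedPoints (S ω))} := by
  obtain ⟨U, hU⟩ := exists_isTopologicalBasis_range_nat X
  have hUo (n : ℕ) : IsOpen (U n) := hU.isOpen ⟨n, rfl⟩
  simp only [subset_closure_isolatedPoints_iff hU]
  refine measurableSet_setOfPred.2 <| .forall fun n ↦
    .imp (measurableSet_setOfPred.1 (hS _ (hUo n))) (.exists fun m ↦ measurableSet_setOfPred.1 ?_)
  exact hS.measurableSet_exists_mem_inter_eq_singleton (hUo m) (hUo n).measurableSet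

lemma measurable_encard_inter_isolatedPoints [MeasurableSpace X] [BorelSpace X]
    (hS : EffrosMeasurable S) {A : Set X} (hA : MeasurableSet A) :
    Measurable fun ω ↦ (A ∩ isolatedPoints (S ω)).encard := by
  obtain ⟨U, hU⟩ := exists_isTopologicalBasis_range_nat X
  have hUo (n : ℕ) : IsOpen (U n) := hU.isOpen ⟨n, rfl⟩
  simp only [encard_inter_isolatedPoints hU]
  have hmeas (n m : ℕ) := measurableSet_setOfPred.1 <|
    hS.measurableSet_exists_mem_inter_eq_singleton (hUo m) (hUo n).measurableSet
  refine measurable_encard.comp (measurable_set_iff.2 fun n ↦ ?_)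
  exact .and (measurableSet_setOfPred.1 <|
    hS.measurableSet_exists_mem_inter_eq_singleton (hUo n) hA)
    (.forall fun m ↦ .forall fun _ ↦ .not (hmeas n m))

lemma measurable_encard_inter_countedPoints [MeasurableSpace X] [BorelSpace X]
    (hS : EffrosMeasurable S) {A : Set X} (hA : MeasurableSet A) :
    Measurable fun ω ↦ (A ∩ countedPoints (S ω)).encard := by
  classical
  have hcases (ω : Ω) : (A ∩ countedPoints (S ω)).encard =
      if S ω ⊆ closure (isolatedPoints (S ω)) then (A ∩ isolatedPoints (S ω)).encard else 0 := by
    split_ifs with h <;> simp [countedPoints, h]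
  simp only [hcases]
  exact .ite hS.measurableSet_subset_closure_isolatedPoints
    (hS.measurable_encard_inter_isolatedPoints hA) measurable_const

end EffrosMeasurable

/-! ### The Effros space of infinite closed sets -/

namespace EffrosStar

variable {Ω X : Type*} [MeasurableSpace Ω] [τ : TopologicalSpace X]

lemma effrosMeasurable_val : EffrosMeasurable fun F : EffrosStar τ ↦ F.1 :=
  fun O hO ↦ MeasurableSpace.measurableSet_generateFrom ⟨O, hO, rfl⟩

lemma measurable_of_effrosMeasurable {Φ : Ω → EffrosStar τ}
    (h : EffrosMeasurable fun ω ↦ (Φ ω).1) : Measurable Φ := by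
  refine measurable_generateFrom ?_
  rintro _ ⟨O, hO, rfl⟩
  exact h O hO

lemma exists_measurable_val_ae_eq [Infinite X] {P : Measure Ω} {S : Ω → Set X}
    (hS : EffrosMeasurable S) (h : ∀ᵐ ω ∂P, IsClosed (S ω) ∧ (S ω).Infinite) :
    ∃ Φ : Ω → EffrosStar τ, Measurable Φ ∧ ∀ᵐ ω ∂P, (Φ ω).1 = S ω := by
  classical
  obtain ⟨G, hGae, hG, hSG⟩ := h.exists_measurable_mem
  let Φ (ω : Ω) : EffrosStar τ := ⟨if ω ∈ G then S ω else univ, by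
    split_ifs with hω
    exacts [hSG ω hω, ⟨isClosed_univ, infinite_univ⟩]⟩
  refine ⟨Φ, measurable_of_effrosMeasurable fun O hO ↦ ?_,
    mem_of_superset hGae fun ω hω ↦ if_pos hω⟩
  convert hG.ite (hS O hO) (.const O.Nonempty) using 1
  ext ω
  by_cases hω : ω ∈ G <;> simp [Φ, hω, Set.ite]

theorem measure_ext {ν₁ ν₂ : Measure (EffrosStar τ)} [IsFiniteMeasure ν₁]
    (h : ∀ O, IsOpen O → ν₁ {F | ¬(F.1 ∩ O).Nonempty} = ν₂ {F | ¬(F.1 ∩ O).Nonempty}) :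
    ν₁ = ν₂ := by
  refine ext_of_generate_finite
    {s | ∃ O, IsOpen O ∧ s = {F : EffrosStar τ | ¬(F.1 ∩ O).Nonempty}} ?_ ?_ ?_ ?_
  · refine (MeasurableSpace.generateFrom_le ?_).antisymm (MeasurableSpace.generateFrom_le ?_)
    · rintro _ ⟨O, hO, rfl⟩
      exact .of_compl (MeasurableSpace.measurableSet_generateFrom ⟨O, hO, rfl⟩)
    · rintro _ ⟨O, hO, rfl⟩
      exact (effrosMeasurable_val O hO).compl
  · rintro _ ⟨O₁, hO₁, rfl⟩ _ ⟨O₂, hO₂, rfl⟩ -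
    refine ⟨O₁ ∪ O₂, hO₁.union hO₂, ?_⟩
    ext F
    simp [inter_union_distrib_left]
  · rintro _ ⟨O, hO, rfl⟩
    exact h O hO
  · simpa using h ∅ isOpen_empty

end EffrosStar

/-! ### The Poisson process of a random closed set -/

/-- The number of counted points of `F` in `A`: the random variables `Ξ_A` of the theorem. -/
def effrosCount {X : Type*} [τ : TopologicalSpace X] (A : Set X) (F : EffrosStar τ) : ℕ∞ :=
  (A ∩ countedPoints F.1).encard

section EffrosCount

variable {X : Type*} [τ : TopologicalSpace X]

lemma effrosCount_eq_encard {F : EffrosStar τ} (hF : IsTauDiscrete τ F.1) (A : Set X) :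
    effrosCount A F = (A ∩ F.1).encard := by
  rw [effrosCount, countedPoints_eq_self hF]

lemma effrosCount_union {A B : Set X} (h : Disjoint A B) (F : EffrosStar τ) :
    effrosCount (A ∪ B) F = effrosCount A F + effrosCount B F := by
  rw [effrosCount, union_inter_distrib_right,
    encard_union_eq (h.mono inter_subset_left inter_subset_left)]
  rfl

variable [MeasurableSpace X]

lemma measurable_effrosCount [T2Space X] [SecondCountableTopology X] [BorelSpace X] {A : Set X}
    (hA : MeasurableSet A) : Measurable (effrosCount (τ := τ) A) :=
  EffrosStar.effrosMeasurable_val.measurable_encard_inter_countedPoints hA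

variable {μ : Measure X} {ν : Measure (EffrosStar τ)} [IsProbabilityMeasure ν]

lemma ae_nonempty_countedPoints_of_isPPP (hμ : μ univ = ∞) (h : IsPPP μ ν effrosCount) :
    ∀ᵐ F ∂ν, (countedPoints F.1).Nonempty := by
  filter_upwards [ae_eq_top_of_hasLaw_extendedPoisson (hμ ▸ h.hasLaw .univ)] with F hF
  rw [effrosCount, univ_inter] at hF
  exact nonempty_iff_ne_empty.2 fun h0 ↦ by simp [h0] at hF

lemma measure_not_nonempty_inter_of_isPPP [OpensMeasurableSpace X] (hμ : μ univ = ∞)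
    (h : IsPPP μ ν effrosCount) {O : Set X} (hO : IsOpen O) :
    ν {F | ¬(F.1 ∩ O).Nonempty} = expNeg (μ O) := by
  rw [← measure_setOf_eq_zero_of_hasLaw_extendedPoisson (h.hasLaw hO.measurableSet)]
  refine measure_congr ?_
  filter_upwards [ae_nonempty_countedPoints_of_isPPP hμ h] with F hF
  refine propext ?_
  change ¬_ ↔ effrosCount O F = 0
  rw [inter_nonempty_iff_countedPoints hF hO, not_nonempty_iff_eq_empty, effrosCount,
    encard_eq_zero]

theorem eq_of_isPPP_effrosCount [OpensMeasurableSpace X] (hμ : μ univ = ∞)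
    {ν' : Measure (EffrosStar τ)} [IsProbabilityMeasure ν'] (h : IsPPP μ ν effrosCount)
    (h' : IsPPP μ ν' effrosCount) : ν = ν' :=
  EffrosStar.measure_ext fun _ hO ↦ by
    rw [measure_not_nonempty_inter_of_isPPP hμ h hO, measure_not_nonempty_inter_of_isPPP hμ h' hO]

lemma ae_isTauDiscrete_of_isPPP [T1Space X] [SecondCountableTopology X] [OpensMeasurableSpace X]
    [IsLocallyFiniteMeasure μ] (hμ : μ univ = ∞) (h : IsPPP μ ν effrosCount) :
    ∀ᵐ F ∂ν, IsTauDiscrete τ F.1 := by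
  filter_upwards [ae_nonempty_countedPoints_of_isPPP hμ h,
    ae_forall_exists_isOpen_ne_top_of_hasLaw fun _ hA ↦ h.hasLaw hA] with F hF hfin
  have hlf (x : X) : ∃ O, IsOpen O ∧ x ∈ O ∧ (countedPoints F.1 ∩ O).Finite := by
    simpa only [effrosCount, encard_ne_top_iff, inter_comm] using hfin x
  have hFeq : F.1 = countedPoints F.1 :=
    ((subset_closure_countedPoints hF).trans_eq
      (isClosed_of_forall_exists_finite_inter hlf).closure_eq).antisymm (countedPoints_subset _)
  rw [hFeq]
  exact isTauDiscrete_of_forall_exists_finite_inter hlf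

lemma isPPP_map_effrosCount [T2Space X] [SecondCountableTopology X] [BorelSpace X] {Ω : Type*}
    [MeasurableSpace Ω] {Q : Measure Ω} [IsProbabilityMeasure Q] {Φ : Ω → EffrosStar τ}
    (hΦ : Measurable Φ)
    (h : ∀ A, MeasurableSet A → HasLaw (effrosCount A ∘ Φ) (extendedPoisson (μ A)) Q) :
    IsPPP μ (Q.map Φ) effrosCount := by
  have := Measure.isProbabilityMeasure_map (μ := Q) hΦ.aemeasurable
  refine ⟨fun _ ↦ measurable_effrosCount, fun A hA ↦ ?_,
    fun _ _ _ _ hAB ↦ .of_forall (effrosCount_union hAB)⟩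
  have hN := measurable_effrosCount (τ := τ) hA
  refine (hasPoissonLaw_iff_hasLaw hN.aemeasurable).2 ⟨hN.aemeasurable, ?_⟩
  rw [Measure.map_map hN hΦ, (h A hA).map_eq]

theorem exists_isPPP_effrosCount [T2Space X] [SecondCountableTopology X] [BorelSpace X]
    (μ : Measure X) [NullSingletonClass μ] [IsLocallyFiniteMeasure μ] (hμ : μ univ = ∞) :
    ∃ ν : Measure (EffrosStar τ), IsProbabilityMeasure ν ∧ IsPPP μ ν effrosCount := by
  have : NeZero μ := ⟨fun h ↦ by simp [h] at hμ⟩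
  obtain ⟨Q, S, hQ, hS⟩ := exists_random_set_hasLaw_extendedPoisson μ
  have hlaw {A : Set X} (hA : MeasurableSet A) := (hS A hA).2
  have hlf : ∀ᵐ ω ∂Q, ∀ x, ∃ O, IsOpen O ∧ x ∈ O ∧ (S ω ∩ O).Finite := by
    simpa only [encard_ne_top_iff, inter_comm] using ae_forall_exists_isOpen_ne_top_of_hasLaw @hlaw
  have hinf : ∀ᵐ ω ∂Q, (S ω).Infinite := by
    filter_upwards [ae_eq_top_of_hasLaw_extendedPoisson (hμ ▸ hlaw .univ)] with ω hω
    rwa [univ_inter, encard_eq_top_iff] at hω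
  have : Infinite X := let ⟨_, hω⟩ := hinf.exists; infinite_univ_iff.1 (hω.mono (subset_univ _))
  obtain ⟨Φ, hΦ, hΦS⟩ := EffrosStar.exists_measurable_val_ae_eq
    (fun O hO ↦ (hS O hO.measurableSet).1)
    ((hlf.mono fun _ ↦ isClosed_of_forall_exists_finite_inter).and hinf)
  have hcount (A : Set X) : effrosCount A ∘ Φ =ᵐ[Q] fun ω ↦ (A ∩ S ω).encard := by
    filter_upwards [hlf, hΦS] with ω hω hωS
    have hdisc : IsTauDiscrete τ (Φ ω).1 := hωS ▸ isTauDiscrete_of_forall_exists_finite_inter hω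
    rw [Function.comp_apply, effrosCount_eq_encard hdisc, hωS]
  exact ⟨Q.map Φ, Measure.isProbabilityMeasure_map hΦ.aemeasurable,
    isPPP_map_effrosCount hΦ fun A hA ↦ (hlaw hA).congr (hcount A)⟩

end EffrosCount

theorem poisson_random_set_general {X : Type*} [MeasurableSpace X] [τ : TopologicalSpace X]
    [T2Space X] [SecondCountableTopology X] [BorelSpace X] :
    ∃ Ξ : Set X → EffrosStar τ → ℕ∞,
      (∀ A, MeasurableSet A → Measurable (Ξ A)) ∧
      (∀ F : EffrosStar τ, IsTauDiscrete τ F.1 → ∀ A, Ξ A F = (A ∩ F.1).encard) ∧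
      (∀ μ : Measure X, NullSingletonClass μ → μ univ = ∞ → IsLocallyFiniteMeasure μ →
        ∃! ν : Measure (EffrosStar τ), IsProbabilityMeasure ν ∧ IsPPP μ ν Ξ) ∧
      (∀ (μ₁ μ₂ : Measure X) (ν : Measure (EffrosStar τ)), IsProbabilityMeasure ν →
        IsPPP μ₁ ν Ξ → IsPPP μ₂ ν Ξ → μ₁ = μ₂) ∧
      (∀ μ : Measure X, μ univ = ∞ → IsLocallyFiniteMeasure μ →
        ∀ ν : Measure (EffrosStar τ), IsProbabilityMeasure ν → IsPPP μ ν Ξ →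
        ∃ D : Set (EffrosStar τ), MeasurableSet D ∧ ν D = 1 ∧ ∀ F ∈ D, IsTauDiscrete τ F.1) := by
  refine ⟨effrosCount, fun _ ↦ measurable_effrosCount, fun _ ↦ effrosCount_eq_encard,
    fun μ _ hμ _ ↦ ?_, fun _ _ _ _ ↦ IsPPP.measure_unique, fun μ hμ _ ν _ h ↦ ?_⟩
  · obtain ⟨ν, hν, h⟩ := exists_isPPP_effrosCount μ hμ
    exact ⟨ν, ⟨hν, h⟩, fun _ ⟨_, h'⟩ ↦ eq_of_isPPP_effrosCount hμ h' h⟩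
  · obtain ⟨D, hDae, hD, hdisc⟩ := (ae_isTauDiscrete_of_isPPP hμ h).exists_measurable_mem
    exact ⟨D, hD, (prob_compl_eq_zero_iff hD).1 hDae, hdisc⟩

theorem poisson_random_set
    {X : Type*} [MeasurableSpace X]
    (τ : TopologicalSpace X) (hτ : @PolishSpace X τ) (hB : @BorelSpace X τ _) :
    ∃ Ξ : Set X → EffrosStar τ → ℕ∞,
      (∀ A : Set X, MeasurableSet A → Measurable (Ξ A)) ∧
      -- on `τ`-discrete closed sets the `Ξ_A` count points: `Ξ_A(F) = #(A ∩ F)`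
      (∀ F : EffrosStar τ, IsTauDiscrete τ F.1 →
        ∀ A : Set X, MeasurableSet A → Ξ A F = (A ∩ F.1).encard) ∧
      -- for every non-atomic σ-finite infinite `τ`-locally finite Borel measure `μ`
      -- there is a unique random closed set `μ*_τ` making `{Ξ_A}` a Poisson point
      -- process with base space `(X, B, μ)` ...
      (∀ μ : Measure X, SigmaFinite μ → NoAtoms μ → μ Set.univ = ∞ →
        @IsLocallyFiniteMeasure X _ τ μ →
        ∃! ν : Measure (EffrosStar τ), IsProbabilityMeasure ν ∧ IsPPP μ ν Ξ) ∧
      (∀ μ₁ μ₂ : Measure X,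
        SigmaFinite μ₁ → NoAtoms μ₁ → μ₁ Set.univ = ∞ → @IsLocallyFiniteMeasure X _ τ μ₁ →
        SigmaFinite μ₂ → NoAtoms μ₂ → μ₂ Set.univ = ∞ → @IsLocallyFiniteMeasure X _ τ μ₂ →
        ∀ ν : Measure (EffrosStar τ), IsProbabilityMeasure ν →
          IsPPP μ₁ ν Ξ → IsPPP μ₂ ν Ξ → μ₁ = μ₂) ∧
      -- ... and each `μ*_τ` is supported on the class of `τ`-discrete closed sets
      (∀ μ : Measure X, SigmaFinite μ → NoAtoms μ → μ Set.univ = ∞ →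
        @IsLocallyFiniteMeasure X _ τ μ →
        ∀ ν : Measure (EffrosStar τ), IsProbabilityMeasure ν → IsPPP μ ν Ξ →
        ∃ D : Set (EffrosStar τ), MeasurableSet D ∧ ν D = 1 ∧
          ∀ F ∈ D, IsTauDiscrete τ (F : EffrosStar τ).1) := by
  obtain ⟨Ξ, hmeas, hcount, hexists, hunique, hsupp⟩ := poisson_random_set_general (X := X)
  exact ⟨Ξ, hmeas, fun F hF A _ ↦ hcount F hF A, fun μ _ ↦ hexists μ,
    fun μ₁ μ₂ _ _ _ _ _ _ _ _ ν ↦ hunique μ₁ μ₂ ν, fun μ _ _ ↦ hsupp μ⟩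

end
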